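/- Assume the Setting. Then it holds P-almost surely that 1_{{𝒱(Y_0) ≥ c^{1/(1−α)}·θ}} · P( ∩_{n=0}^{N} [ {𝒱(Y_n) ≥ c^{(Σ_{k=0}^{n−1} α^k)} · 𝒱(Y_0)^{(α^n)}} ∩ {Y_n ∈ ℍ_n} ] | σ(Y_0) ) ≥ [ Π_{n=1}^{N} inf( { p_n(v) : v ∈ ℍ_{n−1} with 𝒱(v) ≥ θ^{(α^{n−1})} } ∪ {1} ) ] · 1_{{𝒱(Y_0) ≥ c^{1/(1−α)}·θ} ∩ {Y_0 ∈ ℍ_0}}. -/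

import Mathlib

open MeasureTheory ProbabilityTheory
open scoped ENNReal

/-!
For `n ≤ N`, let `B n` be the set of all `v ∈ ℍ n` with `c ^ (1 / (1 - α)) * θ ^ (α ^ n) ≤ V v`.
Since `c ^ (1 / (1 - α))` is a fixed point of `x ↦ c * x ^ α`, a transition from `v ∈ B n` to
`w ∈ ℍ (n + 1)` with `c * V v ^ α ≤ V w` ends in `B (n + 1)`. From `v ∈ B n` such a transition has
probability `p (n + 1) v`, and `V v ≥ θ ^ (α ^ n)` because `c ≤ 1`, so this probability is at least
the `(n + 1)`-st infimum. As `Z (n + 1)` is independent of the past, the infima multiply along the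
chain started in `B 0`, and iterating the growth inequality along a path gives the lower bounds for
`V (Y n)`.
-/

section RealPower

variable {c α : ℝ}

theorem mul_rpow_one_div_one_sub (hc : 0 < c) (hα : α ≠ 1) :
    c * (c ^ (1 / (1 - α))) ^ α = c ^ (1 / (1 - α)) := by
  have hα' : 1 - α ≠ 0 := sub_ne_zero.2 hα.symm
  have hexp : 1 + 1 / (1 - α) * α = 1 / (1 - α) := by
    field_simp
    ring
  rw [← Real.rpow_mul hc.le, ← Real.rpow_one_add' hc.le (by rw [hexp]; exact one_div_ne_zero hα'),
    hexp]

theorem rpow_one_div_one_sub_mul_rpow_le {b x y : ℝ} (hc : 0 < c) (hα0 : 0 ≤ α) (hα1 : α ≠ 1)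
    (hb : 0 ≤ b) (hx : c ^ (1 / (1 - α)) * b ≤ x) (hy : c * x ^ α ≤ y) :
    c ^ (1 / (1 - α)) * b ^ α ≤ y :=
  calc c ^ (1 / (1 - α)) * b ^ α
      = c * (c ^ (1 / (1 - α)) * b) ^ α := by
        rw [Real.mul_rpow (by positivity) hb, ← mul_assoc, mul_rpow_one_div_one_sub hc hα1]
    _ ≤ c * x ^ α := by gcongr
    _ ≤ y := hy

theorem rpow_geom_sum_mul_rpow_le {y : ℕ → ℝ} {n : ℕ} (hc : 0 ≤ c) (hα : 0 ≤ α) (hy0 : 0 ≤ y 0)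
    (hy : ∀ m < n, c * y m ^ α ≤ y (m + 1)) :
    c ^ (∑ k ∈ Finset.range n, α ^ k) * y 0 ^ (α ^ n) ≤ y n := by
  induction n with
  | zero => simp
  | succ n ih =>
    have hsum : ∑ k ∈ Finset.range (n + 1), α ^ k = 1 + (∑ k ∈ Finset.range n, α ^ k) * α := by
      rw [geom_sum_succ, add_comm, mul_comm]
    calc c ^ (∑ k ∈ Finset.range (n + 1), α ^ k) * y 0 ^ (α ^ (n + 1))
        = c * (c ^ (∑ k ∈ Finset.range n, α ^ k) * y 0 ^ (α ^ n)) ^ α := by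
          rw [hsum, Real.rpow_add_of_nonneg hc zero_le_one (by positivity), Real.rpow_one,
            Real.mul_rpow (by positivity) (by positivity), ← Real.rpow_mul hc,
            ← Real.rpow_mul hy0, ← pow_succ, mul_assoc]
      _ ≤ c * y n ^ α := by
          gcongr
          exact ih fun m hm => hy m (hm.trans n.lt_succ_self)
      _ ≤ y (n + 1) := hy n n.lt_succ_self

end RealPower

section Independence

variable {Ω U : Type*} {mU : MeasurableSpace U}

theorem generateFrom_image2_inter (m₁ m₂ : MeasurableSpace Ω) :
    MeasurableSpace.generateFrom
      (Set.image2 (· ∩ ·) {s | MeasurableSet[m₁] s} {t | MeasurableSet[m₂] t}) = m₁ ⊔ m₂ := by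
  refine le_antisymm (MeasurableSpace.generateFrom_le ?_) (sup_le ?_ ?_)
  · rintro _ ⟨s, hs, t, ht, rfl⟩
    exact MeasurableSet.inter ((le_sup_left : m₁ ≤ m₁ ⊔ m₂) s hs)
      ((le_sup_right : m₂ ≤ m₁ ⊔ m₂) t ht)
  · exact fun s hs => MeasurableSpace.measurableSet_generateFrom
      ⟨s, hs, Set.univ, MeasurableSet.univ, Set.inter_univ s⟩
  · exact fun t ht => MeasurableSpace.measurableSet_generateFrom
      ⟨Set.univ, MeasurableSet.univ, t, ht, Set.univ_inter t⟩

theorem isPiSystem_image2_inter {S T : Set (Set Ω)} (hS : IsPiSystem S) (hT : IsPiSystem T) :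
    IsPiSystem (Set.image2 (· ∩ ·) S T) := by
  rintro _ ⟨s, hs, t, ht, rfl⟩ _ ⟨s', hs', t', ht', rfl⟩ hne
  have hinter : s ∩ t ∩ (s' ∩ t') = s ∩ s' ∩ (t ∩ t') := Set.inter_inter_inter_comm s t s' t'
  rw [hinter] at hne ⊢
  exact ⟨_, hS s hs s' hs' hne.left, _, hT t ht t' ht' hne.right, rfl⟩

theorem indep_sup_left_of_indep_sup_right {m₁ m₂ m₃ mΩ : MeasurableSpace Ω} {P : Measure Ω}
    [IsZeroOrProbabilityMeasure P] (h₁ : m₁ ≤ mΩ) (h₂ : m₂ ≤ mΩ) (h₃ : m₃ ≤ mΩ)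
    (h₁₂₃ : Indep m₁ (m₂ ⊔ m₃) P) (h₂₃ : Indep m₂ m₃ P) : Indep (m₁ ⊔ m₂) m₃ P := by
  refine IndepSets.indep (sup_le h₁ h₂) h₃
    (isPiSystem_image2_inter (@MeasurableSpace.isPiSystem_measurableSet _ m₁)
      (@MeasurableSpace.isPiSystem_measurableSet _ m₂))
    (@MeasurableSpace.isPiSystem_measurableSet _ m₃) (generateFrom_image2_inter m₁ m₂).symm
    (@MeasurableSpace.generateFrom_measurableSet _ m₃).symm ?_
  rw [Indep_iff] at h₁₂₃ h₂₃
  rw [IndepSets_iff]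
  rintro _ u ⟨s, hs, t, ht, rfl⟩ hu
  have ht' : MeasurableSet[m₂ ⊔ m₃] t := (le_sup_left : m₂ ≤ m₂ ⊔ m₃) t ht
  have hu' : MeasurableSet[m₂ ⊔ m₃] u := (le_sup_right : m₃ ≤ m₂ ⊔ m₃) u hu
  rw [Set.inter_assoc, h₁₂₃ s (t ∩ u) hs (ht'.inter hu'), h₂₃ t u ht hu, h₁₂₃ s t hs ht',
    mul_assoc]

theorem indep_sup_iSup_of_notMem {ι : Type*} {m₀ mΩ : MeasurableSpace Ω}
    {m : ι → MeasurableSpace Ω} {P : Measure Ω} (hm₀ : m₀ ≤ mΩ) (hm : ∀ i, m i ≤ mΩ)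
    (h₀ : Indep m₀ (⨆ i, m i) P) (hindep : iIndep m P) {S : Set ι} {j : ι} (hj : j ∉ S) :
    Indep (m₀ ⊔ ⨆ i ∈ S, m i) (m j) P := by
  have : IsProbabilityMeasure P := hindep.isProbabilityMeasure
  have hS : Indep (⨆ i ∈ S, m i) (m j) P := by
    simpa using indep_iSup_of_disjoint hm hindep (Set.disjoint_singleton_right.2 hj)
  exact indep_sup_left_of_indep_sup_right hm₀ (iSup₂_le fun i _ => hm i) (hm j)
    (indep_of_indep_of_le_right h₀ (sup_le (iSup₂_le fun i _ => le_iSup m i) (le_iSup m j))) hS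

variable {H : Type*} {mH : MeasurableSpace H} {𝓖 mΩ : MeasurableSpace Ω} {P : Measure Ω}
  [IsFiniteMeasure P] {X : Ω → H} {Z : Ω → U} {C : Set Ω} {S : Set (H × U)}

theorem measure_inter_setOf_prodMk_mem_eq_setLIntegral (h𝓖 : 𝓖 ≤ mΩ) (hX : Measurable[𝓖] X)
    (hZ : Measurable Z) (hindep : Indep 𝓖 (MeasurableSpace.comap Z mU) P)
    (hC : MeasurableSet[𝓖] C) (hS : MeasurableSet S) :
    P (C ∩ {ω | (X ω, Z ω) ∈ S}) = ∫⁻ ω in C, P {ω' | (X ω, Z ω') ∈ S} ∂P := by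
  have hX' : Measurable X := hX.mono h𝓖 le_rfl
  have hlaw : ((P.restrict C).map X).prod (P.map Z) =
      (P.restrict C).map (fun ω => (X ω, Z ω)) := by
    refine Measure.prod_eq fun s t hs ht => ?_
    have hXs : MeasurableSet[𝓖] (X ⁻¹' s ∩ C) := (hX hs).inter hC
    rw [Measure.map_apply (hX'.prodMk hZ) (hs.prod ht), Measure.map_apply hX' hs,
      Measure.map_apply hZ ht, Set.mk_preimage_prod,
      Measure.restrict_apply ((hX' hs).inter (hZ ht)), Measure.restrict_apply (hX' hs),
      Set.inter_right_comm]
    exact (Indep_iff _ _ _).1 hindep _ _ hXs ⟨t, ht, rfl⟩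
  calc P (C ∩ {ω | (X ω, Z ω) ∈ S})
      = (P.restrict C).map (fun ω => (X ω, Z ω)) S := by
        rw [Measure.map_apply (hX'.prodMk hZ) hS, Measure.restrict_apply (hX'.prodMk hZ hS),
          Set.inter_comm]
        rfl
    _ = ∫⁻ ω in C, P.map Z (Prod.mk (X ω) ⁻¹' S) ∂P := by
        rw [← hlaw, Measure.prod_apply hS, lintegral_map (measurable_measure_prodMk_left hS) hX']
    _ = ∫⁻ ω in C, P {ω' | (X ω, Z ω') ∈ S} ∂P :=
        lintegral_congr fun ω => Measure.map_apply hZ (measurable_prodMk_left hS)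

theorem mul_measure_le_measure_inter_setOf_prodMk_mem (h𝓖 : 𝓖 ≤ mΩ) (hX : Measurable[𝓖] X)
    (hZ : Measurable Z) (hindep : Indep 𝓖 (MeasurableSpace.comap Z mU) P)
    (hC : MeasurableSet[𝓖] C) (hS : MeasurableSet S) {q : ℝ≥0∞}
    (hq : ∀ ω ∈ C, q ≤ P {ω' | (X ω, Z ω') ∈ S}) :
    q * P C ≤ P (C ∩ {ω | (X ω, Z ω) ∈ S}) := by
  rw [measure_inter_setOf_prodMk_mem_eq_setLIntegral h𝓖 hX hZ hindep hC hS, ← setLIntegral_const]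
  exact setLIntegral_mono' (h𝓖 C hC) hq

end Independence

theorem mul_indicator_le_condExp_indicator {Ω : Type*} {m mΩ : MeasurableSpace Ω} {P : Measure Ω}
    [IsFiniteMeasure P] {D G : Set Ω} {K : ℝ≥0∞} (hm : m ≤ mΩ) (hD : MeasurableSet[m] D)
    (hG : MeasurableSet G)
    (hK : ∀ A, MeasurableSet[m] A → A ⊆ D → K * P A ≤ P (A ∩ G)) :
    (fun ω => K.toReal * D.indicator (fun _ => (1 : ℝ)) ω) ≤ᵐ[P]
      P[G.indicator (fun _ => (1 : ℝ)) | m] := by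
  have hfm : StronglyMeasurable[m] fun ω => K.toReal * D.indicator (fun _ => (1 : ℝ)) ω :=
    (stronglyMeasurable_const.indicator hD).const_mul _
  have hfi : Integrable (fun ω => K.toReal * D.indicator (fun _ => (1 : ℝ)) ω) P :=
    ((integrable_const (1 : ℝ)).indicator (hm _ hD)).const_mul _
  have hgi : Integrable (G.indicator fun _ => (1 : ℝ)) P :=
    (integrable_const (1 : ℝ)).indicator hG
  refine ae_le_of_ae_le_trim (hm := hm) <| ae_le_of_forall_setIntegral_le (hfi.trim hm hfm)
    (integrable_condExp.trim hm stronglyMeasurable_condExp) fun s hs _ => ?_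
  rw [← setIntegral_trim hm hfm hs, ← setIntegral_trim hm stronglyMeasurable_condExp hs,
    setIntegral_condExp hm hgi hs, integral_const_mul, setIntegral_indicator (hm _ hD),
    setIntegral_indicator hG]
  simp only [setIntegral_const, smul_eq_mul, mul_one]
  have hle : K * P (s ∩ D) ≤ P (s ∩ G) :=
    (hK _ (hs.inter hD) Set.inter_subset_right).trans
      (measure_mono (Set.inter_subset_inter_left G Set.inter_subset_left))
  simpa only [ENNReal.toReal_mul, Measure.real] using
    ENNReal.toReal_mono (measure_ne_top P _) hle

/-- Up to time `N`, the process `Y` solves `Y (n + 1) = Φ (Y n) (Z (n + 1))`, where `Y 0` is known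
at time `0` and `Z (n + 1)` is revealed at time `n + 1`, independently of the past `𝓕 n`. -/
structure IsRandomRecursion {H U Ω : Type*} [mH : MeasurableSpace H] [mU : MeasurableSpace U]
    {mΩ : MeasurableSpace Ω} (P : Measure Ω) (𝓕 : Filtration ℕ mΩ) (Φ : H → U → H) (N : ℕ)
    (Z : ℕ → Ω → U) (Y : ℕ → Ω → H) : Prop where
  measurable_zero : Measurable[𝓕 0] (Y 0)
  measurable_noise : ∀ n < N, Measurable[𝓕 (n + 1)] (Z (n + 1))
  indep_noise : ∀ n < N, Indep (𝓕 n) (MeasurableSpace.comap (Z (n + 1)) mU) P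
  succ_eq : ∀ n < N, ∀ ω, Y (n + 1) ω = Φ (Y n ω) (Z (n + 1) ω)

/-- The event that, for every `m < n`, the transition of `Y` from time `m` to time `m + 1` belongs
to the set `T (m + 1)` of admissible pairs. -/
def transitionEvent {H Ω : Type*} (T : ℕ → Set (H × H)) (Y : ℕ → Ω → H) (n : ℕ) : Set Ω :=
  {ω | ∀ m < n, (Y m ω, Y (m + 1) ω) ∈ T (m + 1)}

theorem transitionEvent_succ {H Ω : Type*} (T : ℕ → Set (H × H)) (Y : ℕ → Ω → H) (n : ℕ) :
    transitionEvent T Y (n + 1) =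
      transitionEvent T Y n ∩ {ω | (Y n ω, Y (n + 1) ω) ∈ T (n + 1)} := by
  ext ω
  exact Nat.forall_lt_succ_right

theorem mem_of_forall_transition {H : Type*} {T : ℕ → Set (H × H)} {B : ℕ → Set H} {y : ℕ → H}
    {n : ℕ} (h₀ : y 0 ∈ B 0)
    (hB : ∀ m < n, ∀ v w, v ∈ B m → (v, w) ∈ T (m + 1) → w ∈ B (m + 1))
    (hy : ∀ m < n, (y m, y (m + 1)) ∈ T (m + 1)) : y n ∈ B n := by
  induction n with
  | zero => exact h₀
  | succ n ih =>
    exact hB n n.lt_succ_self _ _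
      (ih (fun m hm => hB m (by lia)) fun m hm => hy m (by lia)) (hy n n.lt_succ_self)

namespace IsRandomRecursion

variable {H U Ω : Type*} [MeasurableSpace H] [MeasurableSpace U] {mΩ : MeasurableSpace Ω}
  {P : Measure Ω} {𝓕 : Filtration ℕ mΩ} {Φ : H → U → H} {N n : ℕ} {Z : ℕ → Ω → U}
  {Y : ℕ → Ω → H} {T : ℕ → Set (H × H)}

theorem measurable_state (hY : IsRandomRecursion P 𝓕 Φ N Z Y)
    (hΦ : Measurable (Function.uncurry Φ)) (hn : n ≤ N) : Measurable[𝓕 n] (Y n) := by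
  induction n with
  | zero => exact hY.measurable_zero
  | succ n ih =>
    have hpair : Measurable[𝓕 (n + 1)] fun ω => (Y n ω, Z (n + 1) ω) :=
      ((ih (by lia)).mono (𝓕.mono n.le_succ) le_rfl).prodMk (hY.measurable_noise n hn)
    rw [show Y (n + 1) = Function.uncurry Φ ∘ fun ω => (Y n ω, Z (n + 1) ω) from
      funext (hY.succ_eq n hn)]
    exact hΦ.comp hpair

theorem measurableSet_transitionEvent (hY : IsRandomRecursion P 𝓕 Φ N Z Y)
    (hΦ : Measurable (Function.uncurry Φ)) (hT : ∀ m < N, MeasurableSet (T (m + 1)))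
    (hn : n ≤ N) : MeasurableSet[𝓕 n] (transitionEvent T Y n) := by
  simp only [transitionEvent, Set.ofPred_forall]
  refine MeasurableSet.iInter fun m => MeasurableSet.iInter fun hm => ?_
  have hm₀ : Measurable[𝓕 n] (Y m) :=
    (hY.measurable_state hΦ (by lia)).mono (𝓕.mono (by lia)) le_rfl
  have hm₁ : Measurable[𝓕 n] (Y (m + 1)) :=
    (hY.measurable_state hΦ (by lia)).mono (𝓕.mono (by lia)) le_rfl
  exact hm₀.prodMk hm₁ (hT m (by lia))

theorem prod_mul_measure_le_measure_inter_transitionEvent [IsFiniteMeasure P]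
    (hY : IsRandomRecursion P 𝓕 Φ N Z Y) (hΦ : Measurable (Function.uncurry Φ))
    (hT : ∀ m < N, MeasurableSet (T (m + 1))) {B : ℕ → Set H}
    (hB : ∀ m < N, ∀ v w, v ∈ B m → (v, w) ∈ T (m + 1) → w ∈ B (m + 1)) {q : ℕ → ℝ≥0∞}
    (hq : ∀ m < N, ∀ v ∈ B m, q (m + 1) ≤ P {ω | (v, Φ v (Z (m + 1) ω)) ∈ T (m + 1)})
    {A : Set Ω} (hA : MeasurableSet[𝓕 0] A) (hAB : A ⊆ Y 0 ⁻¹' B 0) (hn : n ≤ N) :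
    (∏ m ∈ Finset.Icc 1 n, q m) * P A ≤ P (A ∩ transitionEvent T Y n) := by
  induction n with
  | zero => simp [transitionEvent]
  | succ n ih =>
    set C := A ∩ transitionEvent T Y n with hC_def
    have hC : MeasurableSet[𝓕 n] C :=
      (𝓕.mono n.zero_le A hA).inter (hY.measurableSet_transitionEvent hΦ hT (by lia))
    have hqC : ∀ ω ∈ C, q (n + 1) ≤ P {ω' | (Y n ω, Φ (Y n ω) (Z (n + 1) ω')) ∈ T (n + 1)} :=
      fun ω hω => hq n hn _ <|
        mem_of_forall_transition (hAB hω.1) (fun m hm => hB m (by lia)) hω.2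
    have hS : MeasurableSet {x : H × U | (x.1, Φ x.1 x.2) ∈ T (n + 1)} :=
      measurable_fst.prodMk hΦ (hT n hn)
    have hZ : Measurable (Z (n + 1)) := (hY.measurable_noise n hn).mono (𝓕.le _) le_rfl
    calc (∏ m ∈ Finset.Icc 1 (n + 1), q m) * P A
        = q (n + 1) * ((∏ m ∈ Finset.Icc 1 n, q m) * P A) := by
          rw [Finset.prod_Icc_succ_top (by lia), mul_comm _ (q (n + 1)), mul_assoc]
      _ ≤ q (n + 1) * P C := by
          gcongr
          exact ih (by lia)
      _ ≤ P (C ∩ {ω | (Y n ω, Φ (Y n ω) (Z (n + 1) ω)) ∈ T (n + 1)}) :=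
          mul_measure_le_measure_inter_setOf_prodMk_mem (𝓕.le n)
            (hY.measurable_state hΦ (by lia)) hZ (hY.indep_noise n hn) hC hS hqC
      _ = P (A ∩ transitionEvent T Y (n + 1)) := by
          simp only [hC_def, transitionEvent_succ, Set.inter_assoc, hY.succ_eq n hn]

end IsRandomRecursion

section PowerGrowth

variable {H U Ω : Type*} {c α θ : ℝ} {V : H → ℝ} {Hs : ℕ → Set H} {Y : ℕ → Ω → H} {n N : ℕ}

/-- The pairs `(v, w)` such that `w` lies in `K` and `V` grows from `v` to `w` at least like
`x ↦ c * x ^ α`. -/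
def growthTransitions (c α : ℝ) (V : H → ℝ) (K : Set H) : Set (H × H) :=
  {x | c * V x.1 ^ α ≤ V x.2 ∧ x.2 ∈ K}

/-- The set `B n` of states at time `n`; the transitions in `growthTransitions c α V (Hs (n + 1))`
lead from `B n` into `B (n + 1)`. The factor `c ^ (1 / (1 - α))` is the positive fixed point of
`x ↦ c * x ^ α`. -/
def growthRegion (c α θ : ℝ) (V : H → ℝ) (Hs : ℕ → Set H) (n : ℕ) : Set H :=
  {v | v ∈ Hs n ∧ c ^ (1 / (1 - α)) * θ ^ (α ^ n) ≤ V v}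

/-- The event that `Y` follows `Hs` and `V (Y n)` dominates, up to time `N`, the iterates of
`x ↦ c * x ^ α` started at `V (Y 0)`, which have the closed form
`c ^ (1 + α + ⋯ + α ^ (n - 1)) * V (Y 0) ^ (α ^ n)`. -/
def growthEvent (c α : ℝ) (V : H → ℝ) (Hs : ℕ → Set H) (Y : ℕ → Ω → H) (N : ℕ) : Set Ω :=
  ⋂ n ∈ Finset.Iic N, {ω | c ^ (∑ k ∈ Finset.range n, α ^ k) * V (Y 0 ω) ^ (α ^ n) ≤ V (Y n ω) ∧
    Y n ω ∈ Hs n}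

theorem growthRegion_zero :
    growthRegion c α θ V Hs 0 = {v | v ∈ Hs 0 ∧ c ^ (1 / (1 - α)) * θ ≤ V v} := by
  simp [growthRegion]

theorem mem_growthRegion_succ (hc : 0 < c) (hα : 1 < α) (hθ : 0 ≤ θ) {v w : H}
    (hv : v ∈ growthRegion c α θ V Hs n) (hvw : (v, w) ∈ growthTransitions c α V (Hs (n + 1))) :
    w ∈ growthRegion c α θ V Hs (n + 1) := by
  refine ⟨hvw.2, ?_⟩
  rw [pow_succ, Real.rpow_mul hθ]
  exact rpow_one_div_one_sub_mul_rpow_le hc (by linarith) hα.ne' (by positivity) hv.2 hvw.1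

theorem rpow_le_of_mem_growthRegion (hc0 : 0 < c) (hc1 : c ≤ 1) (hα : 1 < α) (hθ : 0 ≤ θ) {v : H}
    (hv : v ∈ growthRegion c α θ V Hs n) : θ ^ (α ^ n) ≤ V v := by
  have hc : 1 ≤ c ^ (1 / (1 - α)) := Real.one_le_rpow_of_pos_of_le_one_of_nonpos hc0 hc1
    (one_div_nonpos.2 (sub_nonpos.2 hα.le))
  exact (le_mul_of_one_le_left (by positivity) hc).trans hv.2

theorem inter_transitionEvent_subset_growthEvent (hc : 0 ≤ c) (hα : 0 ≤ α) (hθ : 0 ≤ θ) :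
    Y 0 ⁻¹' growthRegion c α θ V Hs 0 ∩
        transitionEvent (fun n => growthTransitions c α V (Hs n)) Y N ⊆
      growthEvent c α V Hs Y N := by
  rintro ω ⟨hω₀, hω⟩
  have hV₀ : 0 ≤ V (Y 0 ω) := le_trans (by positivity) hω₀.2
  refine Set.mem_iInter₂.2 fun n hn => ⟨?_, ?_⟩
  · exact rpow_geom_sum_mul_rpow_le (y := fun m => V (Y m ω)) hc hα hV₀
      fun m hm => (hω m (hm.trans_le (Finset.mem_Iic.1 hn))).1
  · cases n with
    | zero => exact hω₀.1
    | succ m => exact (hω m (Finset.mem_Iic.1 hn)).2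

variable [MeasurableSpace H] [MeasurableSpace U] {mΩ : MeasurableSpace Ω}

theorem measurableSet_growthTransitions (hV : Measurable V) {K : Set H} (hK : MeasurableSet K) :
    MeasurableSet (growthTransitions c α V K) :=
  (measurableSet_le (((hV.comp measurable_fst).pow_const α).const_mul c)
    (hV.comp measurable_snd)).inter (measurable_snd hK)

theorem measurableSet_growthRegion (hV : Measurable V) (hHs : MeasurableSet (Hs n)) :
    MeasurableSet (growthRegion c α θ V Hs n) :=
  hHs.inter (measurableSet_le measurable_const hV)

theorem measurableSet_growthEvent (hV : Measurable V) (hHs : ∀ n ≤ N, MeasurableSet (Hs n))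
    (hY : ∀ n ≤ N, Measurable (Y n)) : MeasurableSet (growthEvent c α V Hs Y N) := by
  refine Finset.measurableSet_biInter _ fun n hn => ?_
  have hnN : n ≤ N := Finset.mem_Iic.1 hn
  exact (measurableSet_le (((hV.comp (hY 0 N.zero_le)).pow_const _).const_mul _)
    (hV.comp (hY n hnN))).inter (hY n hnN (hHs n hnN))

theorem IsRandomRecursion.prod_mul_measure_le_measure_inter_growthEvent {P : Measure Ω}
    [IsFiniteMeasure P] {𝓕 : Filtration ℕ mΩ} {Φ : H → U → H} {Z : ℕ → Ω → U}
    (hY : IsRandomRecursion P 𝓕 Φ N Z Y) (hΦ : Measurable (Function.uncurry Φ)) (hc0 : 0 < c)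
    (hc1 : c ≤ 1) (hα : 1 < α) (hθ : 0 ≤ θ) (hV : Measurable V)
    (hHs : ∀ n ≤ N, MeasurableSet (Hs n)) {q : ℕ → ℝ≥0∞}
    (hq : ∀ n < N, ∀ v ∈ Hs n, θ ^ (α ^ n) ≤ V v →
      q (n + 1) ≤ P {ω | c * V v ^ α ≤ V (Φ v (Z (n + 1) ω)) ∧ Φ v (Z (n + 1) ω) ∈ Hs (n + 1)})
    {A : Set Ω} (hA : MeasurableSet[𝓕 0] A) (hAY : A ⊆ Y 0 ⁻¹' growthRegion c α θ V Hs 0) :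
    (∏ n ∈ Finset.Icc 1 N, q n) * P A ≤ P (A ∩ growthEvent c α V Hs Y N) :=
  calc (∏ n ∈ Finset.Icc 1 N, q n) * P A
      ≤ P (A ∩ transitionEvent (fun n => growthTransitions c α V (Hs n)) Y N) :=
        hY.prod_mul_measure_le_measure_inter_transitionEvent hΦ
          (fun n hn => measurableSet_growthTransitions hV (hHs (n + 1) hn))
          (fun _ _ _ _ => mem_growthRegion_succ hc0 hα hθ)
          (fun n hn v hv => hq n hn v hv.1 (rpow_le_of_mem_growthRegion hc0 hc1 hα hθ hv))
          hA hAY le_rfl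
    _ ≤ P (A ∩ growthEvent c α V Hs Y N) := measure_mono fun _ hω =>
        ⟨hω.1, inter_transitionEvent_subset_growthEvent hc0.le (by linarith) hθ ⟨hAY hω.1, hω.2⟩⟩

end PowerGrowth

section IndependentNoise

variable {H U Ω : Type*} [mH : MeasurableSpace H] [mU : MeasurableSpace U]
  {mΩ : MeasurableSpace Ω} {N : ℕ} {Z : ℕ → Ω → U} {Y : ℕ → Ω → H}

/-- The filtration `σ(Y₀, Z₁, …, Zₙ)`, constant from time `N` on since `Z n` need not be
measurable for `n > N`. -/
def noiseFiltration {Y₀ : Ω → H} (hY₀ : Measurable Y₀)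
    (hZ : ∀ k : Finset.Icc 1 N, Measurable (Z k)) : Filtration ℕ mΩ where
  seq n := MeasurableSpace.comap Y₀ mH ⊔
    ⨆ k ∈ {k : Finset.Icc 1 N | (k : ℕ) ≤ n}, MeasurableSpace.comap (Z k) mU
  mono' _ _ hmn := sup_le_sup_left (biSup_mono fun _ hk => le_trans hk hmn) _
  le' _ := sup_le hY₀.comap_le (iSup₂_le fun k _ => (hZ k).comap_le)

theorem noiseFiltration_zero {Y₀ : Ω → H} (hY₀ : Measurable Y₀)
    (hZ : ∀ k : Finset.Icc 1 N, Measurable (Z k)) :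
    noiseFiltration hY₀ hZ 0 = MeasurableSpace.comap Y₀ mH := by
  refine le_antisymm (sup_le le_rfl (iSup₂_le fun k hk => ?_)) le_sup_left
  have hk₀ : (k : ℕ) ≤ 0 := hk
  have hk₁ : 1 ≤ (k : ℕ) := (Finset.mem_Icc.1 k.2).1
  lia

theorem isRandomRecursion_noiseFiltration {P : Measure Ω} {Φ : H → U → H}
    (hY₀ : Measurable (Y 0)) (hZ : ∀ k : Finset.Icc 1 N, Measurable (Z k))
    (hZindep : iIndepFun (fun k : Finset.Icc 1 N => Z k) P)
    (hYZindep : Indep (MeasurableSpace.comap (Y 0) mH)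
      (⨆ k ∈ Finset.Icc 1 N, MeasurableSpace.comap (Z k) mU) P)
    (hYrec : ∀ n < N, ∀ ω, Y (n + 1) ω = Φ (Y n ω) (Z (n + 1) ω)) :
    IsRandomRecursion P (noiseFiltration hY₀ hZ) Φ N Z Y where
  measurable_zero := (comap_measurable (Y 0)).mono le_sup_left le_rfl
  measurable_noise n hn := by
    let k : Finset.Icc 1 N := ⟨n + 1, Finset.mem_Icc.2 ⟨by lia, hn⟩⟩
    have hk : MeasurableSpace.comap (Z k) mU ≤
        ⨆ j ∈ {j : Finset.Icc 1 N | (j : ℕ) ≤ n + 1}, MeasurableSpace.comap (Z j) mU :=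
      le_iSup₂_of_le (f := fun (j : Finset.Icc 1 N) _ => MeasurableSpace.comap (Z j) mU)
        k (le_refl (n + 1)) le_rfl
    exact (comap_measurable (Z (n + 1))).mono (hk.trans le_sup_right) le_rfl
  indep_noise n hn := by
    let k : Finset.Icc 1 N := ⟨n + 1, Finset.mem_Icc.2 ⟨by lia, hn⟩⟩
    rw [iSup_subtype'] at hYZindep
    exact indep_sup_iSup_of_notMem (m := fun j : Finset.Icc 1 N => MeasurableSpace.comap (Z j) mU)
      hY₀.comap_le (fun j => (hZ j).comap_le) hYZindep hZindep (j := k) n.lt_irrefl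
  succ_eq := hYrec

end IndependentNoise

theorem conditional_probability_lower_full_general
    {H U Ω : Type*} [MeasurableSpace H] [MeasurableSpace U] [mΩ : MeasurableSpace Ω]
    (P : Measure Ω) [IsFiniteMeasure P] (𝓕 : Filtration ℕ mΩ)
    (Φ : H → U → H) (hΦ : Measurable (Function.uncurry Φ)) (N : ℕ)
    (c α θ : ℝ) (hc0 : 0 < c) (hc1 : c ≤ 1) (hα : 1 < α) (hθ : 0 ≤ θ)
    (Hs : ℕ → Set H) (hHs : ∀ n ≤ N, MeasurableSet (Hs n))
    (Z : ℕ → Ω → U) (Y : ℕ → Ω → H) (hY : IsRandomRecursion P 𝓕 Φ N Z Y)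
    (V : H → ℝ) (hV : Measurable V) (p : ℕ → H → ℝ≥0∞)
    (hp : ∀ n, 1 ≤ n → n ≤ N → ∀ v : H,
        p n v = P {ω | c * V v ^ α ≤ V (Φ v (Z n ω)) ∧ Φ v (Z n ω) ∈ Hs n}) :
    ∀ᵐ ω ∂P,
      (∏ n ∈ Finset.Icc 1 N,
          (sInf ((p n '' {v | v ∈ Hs (n - 1) ∧ θ ^ (α ^ (n - 1)) ≤ V v}) ∪ {1})).toReal) *
        Set.indicator ({ω' | c ^ (1 / (1 - α)) * θ ≤ V (Y 0 ω')} ∩ {ω' | Y 0 ω' ∈ Hs 0})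
          (fun _ => (1 : ℝ)) ω ≤
      Set.indicator {ω' | c ^ (1 / (1 - α)) * θ ≤ V (Y 0 ω')} (fun _ => (1 : ℝ)) ω *
        (P[Set.indicator (⋂ n ∈ Finset.Iic N,
            {ω' | c ^ (∑ k ∈ Finset.range n, α ^ k) * V (Y 0 ω') ^ (α ^ n) ≤ V (Y n ω') ∧
              Y n ω' ∈ Hs n}) (fun _ => (1 : ℝ)) | 𝓕 0]) ω := by
  set E := {ω | c ^ (1 / (1 - α)) * θ ≤ V (Y 0 ω)}
  set q : ℕ → ℝ≥0∞ := fun n =>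
    sInf ((p n '' {v | v ∈ Hs (n - 1) ∧ θ ^ (α ^ (n - 1)) ≤ V v}) ∪ {1})
  have hstart : Y 0 ⁻¹' growthRegion c α θ V Hs 0 = E ∩ {ω | Y 0 ω ∈ Hs 0} := by
    rw [growthRegion_zero, Set.inter_comm]
    rfl
  have hq : ∀ n < N, ∀ v ∈ Hs n, θ ^ (α ^ n) ≤ V v → q (n + 1) ≤
      P {ω | c * V v ^ α ≤ V (Φ v (Z (n + 1) ω)) ∧ Φ v (Z (n + 1) ω) ∈ Hs (n + 1)} :=
    fun n hn v hv hVv => hp (n + 1) (by lia) hn v ▸ sInf_le (.inl ⟨v, ⟨hv, hVv⟩, rfl⟩)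
  have hbound := mul_indicator_le_condExp_indicator (𝓕.le 0)
    (hY.measurable_zero (measurableSet_growthRegion hV (hHs 0 N.zero_le)))
    (measurableSet_growthEvent hV hHs fun n hn => (hY.measurable_state hΦ hn).mono (𝓕.le n) le_rfl)
    fun A => hY.prod_mul_measure_le_measure_inter_growthEvent hΦ hc0 hc1 hα hθ hV hHs hq
  rw [hstart, ENNReal.toReal_prod] at hbound
  filter_upwards [hbound] with ω hω
  by_cases hωE : ω ∈ E
  · rwa [Set.indicator_of_mem hωE, one_mul]
  · rw [Set.indicator_of_notMem hωE, Set.indicator_of_notMem fun h => hωE h.1, mul_zero, zero_mul]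

/-- In the abstract Markov-chain setting, on the event `{𝒱(Y_0) ≥ c^{1/(1−α)}·θ}`, the
conditional probability given `σ(Y_0)` of the event
`∩_{n=0}^{N} [{𝒱(Y_n) ≥ c^{Σ_{k<n} α^k}·𝒱(Y_0)^{α^n}} ∩ {Y_n ∈ ℍ_n}]` is bounded below,
`P`-almost surely, by the product over `n = 1,...,N` of
`inf({p_n(v) : v ∈ ℍ_{n−1}, 𝒱(v) ≥ θ^{α^{n−1}}} ∪ {1})` times the indicator of
`{𝒱(Y_0) ≥ c^{1/(1−α)}·θ} ∩ {Y_0 ∈ ℍ_0}`. -/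
theorem conditional_probability_lower_full
    {H U Ω : Type*} [mH : MeasurableSpace H] [mU : MeasurableSpace U] [mΩ : MeasurableSpace Ω]
    (P : Measure Ω) [IsProbabilityMeasure P]
    (Φ : H → U → H) (hΦ : Measurable (Function.uncurry Φ))
    (N : ℕ) (hN : 1 ≤ N)
    (c α θ : ℝ) (hc0 : 0 < c) (hc1 : c ≤ 1) (hα : 1 < α) (hθ : 1 < θ)
    (Hs : ℕ → Set H) (hHs : ∀ n ≤ N, MeasurableSet (Hs n))
    (Z : ℕ → Ω → U) (hZmeas : ∀ n, 1 ≤ n → n ≤ N → Measurable (Z n))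
    (hZindep : iIndepFun (fun n : (Finset.Icc 1 N) => Z (n : ℕ)) P)
    (hZid : ∀ n, 1 ≤ n → n ≤ N → P.map (Z n) = P.map (Z 1))
    (Y : ℕ → Ω → H) (hY0meas : Measurable (Y 0))
    (hYrec : ∀ n, 1 ≤ n → n ≤ N → ∀ ω, Y n ω = Φ (Y (n - 1) ω) (Z n ω))
    (hYZindep : Indep (MeasurableSpace.comap (Y 0) mH)
        (⨆ n ∈ Finset.Icc 1 N, MeasurableSpace.comap (Z n) mU) P)
    (V : H → ℝ) (hV : Measurable V) (hVpos : ∀ x, 0 ≤ V x)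
    (p : ℕ → H → ℝ≥0∞)
    (hp : ∀ n, 1 ≤ n → n ≤ N → ∀ v : H,
        p n v = P {ω | c * V v ^ α ≤ V (Φ v (Z n ω)) ∧ Φ v (Z n ω) ∈ Hs n}) :
    ∀ᵐ ω ∂P,
      (∏ n ∈ Finset.Icc 1 N,
          (sInf ((p n '' {v | v ∈ Hs (n - 1) ∧ θ ^ (α ^ (n - 1)) ≤ V v}) ∪ {1})).toReal) *
        Set.indicator ({ω' | c ^ (1 / (1 - α)) * θ ≤ V (Y 0 ω')} ∩ {ω' | Y 0 ω' ∈ Hs 0})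
          (fun _ => (1 : ℝ)) ω ≤
      Set.indicator {ω' | c ^ (1 / (1 - α)) * θ ≤ V (Y 0 ω')} (fun _ => (1 : ℝ)) ω *
        (P[Set.indicator (⋂ n ∈ Finset.Iic N,
            {ω' | c ^ (∑ k ∈ Finset.range n, α ^ k) * V (Y 0 ω') ^ (α ^ n) ≤ V (Y n ω') ∧
              Y n ω' ∈ Hs n}) (fun _ => (1 : ℝ)) |
            MeasurableSpace.comap (Y 0) mH]) ω := by
  have hZ : ∀ k : Finset.Icc 1 N, Measurable (Z k) :=
    fun k => hZmeas k (Finset.mem_Icc.1 k.2).1 (Finset.mem_Icc.1 k.2).2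
  have hY := isRandomRecursion_noiseFiltration hY0meas hZ hZindep hYZindep
    fun n hn => hYrec (n + 1) (by lia) hn
  simpa only [noiseFiltration_zero] using conditional_probability_lower_full_general P _ Φ hΦ N
    c α θ hc0 hc1 hα (zero_le_one.trans hθ.le) Hs hHs Z Y hY V hV p hp
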